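/- Let λ0 ∈ ℝ and let g be an exchangeable prior. Let d be a pseudo symmetric design with c_{d22} > 0 that is E_{g,λ0}-optimal for the proportional model. Then d is universally optimal under the traditional linear crossover model: for every real-valued function Φ on symmetric positive semidefinite t×t matrices that is concave, satisfies Φ(S′CS) = Φ(C) for every permutation matrix S, and is such that Φ(bC) is nondecreasing in the scalar b > 0, and for every design d′, every generalized inverse G′ of C_{d′22} (i.e., every t×t matrix G′ with C_{d′22} G′ C_{d′22} = C_{d′22}), and every generalized inverse G of C_{d22}, one has Φ(C_{d′11} − C_{d′12} G′ C_{d′21}) ≤ Φ(C_{d11} − C_{d12} G C_{d21}). -/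

import Mathlib

open Matrix MeasureTheory
open scoped Classical

noncomputable section

/-- A treatment sequence: assigns a treatment in `Fin t` to each period in `Fin p`. -/
abbrev TrtSeq (p t : ℕ) := Fin p → Fin t

/-- Treatment/period incidence matrix `T_s`. -/
def Tmat {p t : ℕ} (s : TrtSeq p t) : Matrix (Fin p) (Fin t) ℝ :=
  Matrix.of fun k i => if s k = i then 1 else 0

/-- Carryover incidence matrix `F_s`: first row zero, row `k` records the treatment
in period `k-1`. -/
def Fmat {p t : ℕ} (s : TrtSeq p t) : Matrix (Fin p) (Fin t) ℝ :=
  Matrix.of fun k i =>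
    if (k : ℕ) = 0 then 0
    else if s ⟨(k : ℕ) - 1, Nat.lt_of_le_of_lt (Nat.sub_le _ _) k.isLt⟩ = i then 1 else 0

/-- The all-ones `m × m` matrix `J_m`. -/
def Jmat (m : ℕ) : Matrix (Fin m) (Fin m) ℝ := Matrix.of fun _ _ => 1

/-- `B_t = I_t - J_t / t`. -/
def Bmat (t : ℕ) : Matrix (Fin t) (Fin t) ℝ := 1 - ((t : ℝ))⁻¹ • Jmat t

/-- `B̃ = Σ⁻¹ - Σ⁻¹ J_p Σ⁻¹ / (1_p' Σ⁻¹ 1_p)`. -/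
def Btil {p : ℕ} (S : Matrix (Fin p) (Fin p) ℝ) : Matrix (Fin p) (Fin p) ℝ :=
  S⁻¹ - (((fun _ => (1 : ℝ)) : Fin p → ℝ) ⬝ᵥ (S⁻¹ *ᵥ fun _ => (1 : ℝ)))⁻¹ •
    (S⁻¹ * Jmat p * S⁻¹)

/-- `G_1(s) = T_s`, `G_2(s) = F_s`. -/
def Gmat {p t : ℕ} (i : Fin 2) (s : TrtSeq p t) : Matrix (Fin p) (Fin t) ℝ :=
  if i = 0 then Tmat s else Fmat s

/-- An approximate design: nonnegative weights summing to one. -/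
def IsDesign {p t : ℕ} (w : TrtSeq p t → ℝ) : Prop :=
  (∀ s, 0 ≤ w s) ∧ ∑ s : TrtSeq p t, w s = 1

/-- `Ĉ_{sij} = B_t G_i(s)' B̃ G_j(s) B_t`. -/
def Chat {p t : ℕ} (S : Matrix (Fin p) (Fin p) ℝ) (s : TrtSeq p t) (i j : Fin 2) :
    Matrix (Fin t) (Fin t) ℝ :=
  Bmat t * (Gmat i s)ᵀ * Btil S * Gmat j s * Bmat t

/-- `c_{sij} = tr Ĉ_{sij}`. -/
def cseq {p t : ℕ} (S : Matrix (Fin p) (Fin p) ℝ) (s : TrtSeq p t) (i j : Fin 2) : ℝ :=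
  (Chat S s i j).trace

/-- `Ĉ_{dij} = n ∑_s p_s Ĉ_{sij}`. -/
def ChatD {p t : ℕ} (n : ℕ) (S : Matrix (Fin p) (Fin p) ℝ) (w : TrtSeq p t → ℝ)
    (i j : Fin 2) : Matrix (Fin t) (Fin t) ℝ :=
  (n : ℝ) • ∑ s : TrtSeq p t, w s • Chat S s i j

/-- `C_{dij} = Ĉ_{dij} - n (∑_s p_s G_i(s) B_t)' B̃ (∑_s p_s G_j(s) B_t)`. -/
def CD {p t : ℕ} (n : ℕ) (S : Matrix (Fin p) (Fin p) ℝ) (w : TrtSeq p t → ℝ)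
    (i j : Fin 2) : Matrix (Fin t) (Fin t) ℝ :=
  ChatD n S w i j -
    (n : ℝ) • ((∑ s : TrtSeq p t, w s • (Gmat i s * Bmat t))ᵀ * Btil S *
      (∑ s : TrtSeq p t, w s • (Gmat j s * Bmat t)))

/-- `c_{dij} = tr Ĉ_{dij} = n ∑_s p_s c_{sij}`. -/
def cD {p t : ℕ} (n : ℕ) (S : Matrix (Fin p) (Fin p) ℝ) (w : TrtSeq p t → ℝ)
    (i j : Fin 2) : ℝ :=
  (ChatD n S w i j).trace

/-- Fisher information matrix `C_{d,τ0,λ0}` for the direct treatment effects under the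
proportional model. -/
def CInfo {p t : ℕ} (n : ℕ) (S : Matrix (Fin p) (Fin p) ℝ) (w : TrtSeq p t → ℝ)
    (τ0 : Fin t → ℝ) (l0 : ℝ) : Matrix (Fin t) (Fin t) ℝ :=
  CD n S w 0 0 + l0 • (CD n S w 0 1 + CD n S w 1 0) + (l0 ^ 2) • CD n S w 1 1 -
    (τ0 ⬝ᵥ (CD n S w 1 1 *ᵥ τ0))⁻¹ •
      ((CD n S w 0 1 + l0 • CD n S w 1 1) * vecMulVec τ0 τ0 *
        (CD n S w 1 0 + l0 • CD n S w 1 1))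

/-- Permutation matrix `S_σ` with `(S_σ)_{j,i} = 1` iff `i = σ j`. -/
def Smat {t : ℕ} (σ : Equiv.Perm (Fin t)) : Matrix (Fin t) (Fin t) ℝ :=
  Matrix.of fun j i => if i = σ j then 1 else 0

/-- The relabelled sequence `σ ∘ s`. -/
def permSeq {p t : ℕ} (σ : Equiv.Perm (Fin t)) (s : TrtSeq p t) : TrtSeq p t := fun k => σ (s k)

/-- The design `σ d`, with weights `(σd)_s = p_{σ⁻¹ ∘ s}`. -/
def permDesign {p t : ℕ} (σ : Equiv.Perm (Fin t)) (w : TrtSeq p t → ℝ) : TrtSeq p t → ℝ :=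
  fun s => w (permSeq σ⁻¹ s)

/-- A design is symmetric if its weights are invariant under treatment relabelling. -/
def IsSymmetricDesign {p t : ℕ} (w : TrtSeq p t → ℝ) : Prop :=
  ∀ (σ : Equiv.Perm (Fin t)) (s : TrtSeq p t), w (permSeq σ s) = w s

/-- The symmetrized design `d*` with weights `p*_s = (1/t!) ∑_σ p_{σ⁻¹ ∘ s}`. -/
def symmetrize {p t : ℕ} (w : TrtSeq p t → ℝ) : TrtSeq p t → ℝ :=
  fun s => ((Nat.factorial t : ℝ))⁻¹ * ∑ σ : Equiv.Perm (Fin t), permDesign σ w s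

/-- `q_s(x) = c_{s11} + 2 c_{s12} x + c_{s22} x²`. -/
def qSeq {p t : ℕ} (S : Matrix (Fin p) (Fin p) ℝ) (s : TrtSeq p t) (x : ℝ) : ℝ :=
  cseq S s 0 0 + 2 * cseq S s 0 1 * x + cseq S s 1 1 * x ^ 2

/-- `q(x) = max_{s ∈ S} q_s(x)`. -/
def qMax (p t : ℕ) (S : Matrix (Fin p) (Fin p) ℝ) (x : ℝ) : ℝ :=
  sSup (Set.range fun s : TrtSeq p t => qSeq S s x)

/-- `y* = inf_x q(x)`. -/
def yStar (p t : ℕ) (S : Matrix (Fin p) (Fin p) ℝ) : ℝ := ⨅ x : ℝ, qMax p t S x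

/-- `q_d(x) = ∑_s p_s q_s(x)`. -/
def qD {p t : ℕ} (S : Matrix (Fin p) (Fin p) ℝ) (w : TrtSeq p t → ℝ) (x : ℝ) : ℝ :=
  ∑ s : TrtSeq p t, w s * qSeq S s x

/-- `x_d = -c_{d12}/c_{d22}`. -/
def xD {p t : ℕ} (n : ℕ) (S : Matrix (Fin p) (Fin p) ℝ) (w : TrtSeq p t → ℝ) : ℝ :=
  -(cD n S w 0 1) / cD n S w 1 1

/-- An exchangeable prior: a probability measure on `{τ : 1'τ = 0, τ ≠ 0}` that is
invariant under all coordinate permutations of `ℝ^t`. -/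
def IsExchangeablePrior {t : ℕ} (g : Measure (Fin t → ℝ)) : Prop :=
  IsProbabilityMeasure g ∧
    g {τ : Fin t → ℝ | ¬((∑ i, τ i) = 0 ∧ τ ≠ 0)} = 0 ∧
    ∀ σ : Equiv.Perm (Fin t), Measure.map (fun τ i => τ (σ i)) g = g

/-- `m_d(τ0) = min {ℓ' C_{d,τ0,λ0} ℓ : 1'ℓ = 0, ℓ'ℓ = 1}`. -/
def mD {p t : ℕ} (n : ℕ) (S : Matrix (Fin p) (Fin p) ℝ) (w : TrtSeq p t → ℝ) (l0 : ℝ)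
    (τ0 : Fin t → ℝ) : ℝ :=
  sInf {v : ℝ | ∃ l : Fin t → ℝ, (∑ i, l i) = 0 ∧ l ⬝ᵥ l = 1 ∧
    v = l ⬝ᵥ (CInfo n S w τ0 l0 *ᵥ l)}

/-- The E-criterion value `E_{g,λ0}(d) = ∫ m_d(τ0) g(dτ0)`. -/
def Ecrit {p t : ℕ} (n : ℕ) (S : Matrix (Fin p) (Fin p) ℝ) (g : Measure (Fin t → ℝ))
    (l0 : ℝ) (w : TrtSeq p t → ℝ) : ℝ :=
  ∫ τ0, mD n S w l0 τ0 ∂g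

/-- Competing designs for E-optimality: designs with a.e. positive `τ0' C_{d22} τ0`
and `g`-integrable `m_d`. -/
def EAdmissible {p t : ℕ} (n : ℕ) (S : Matrix (Fin p) (Fin p) ℝ) (g : Measure (Fin t → ℝ))
    (l0 : ℝ) (w : TrtSeq p t → ℝ) : Prop :=
  IsDesign w ∧ (∀ᵐ τ0 ∂g, 0 < τ0 ⬝ᵥ (CD n S w 1 1 *ᵥ τ0)) ∧
    Integrable (mD n S w l0) g

/-- `d` is `E_{g,λ0}`-optimal. -/
def EOptimal {p t : ℕ} (n : ℕ) (S : Matrix (Fin p) (Fin p) ℝ) (g : Measure (Fin t → ℝ))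
    (l0 : ℝ) (w : TrtSeq p t → ℝ) : Prop :=
  ∀ w' : TrtSeq p t → ℝ, EAdmissible n S g l0 w' → Ecrit n S g l0 w' ≤ Ecrit n S g l0 w

/-- A pseudo symmetric design: treatments equireplicated in each period,
and all `C_{dij}` completely symmetric. -/
def IsPseudoSymmetric {p t : ℕ} (n : ℕ) (S : Matrix (Fin p) (Fin p) ℝ)
    (w : TrtSeq p t → ℝ) : Prop :=
  (∀ (k : Fin p) (i : Fin t),
    (∑ s ∈ Finset.univ.filter fun s : TrtSeq p t => s k = i, w s) = 1 / (t : ℝ)) ∧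
  ∀ i j : Fin 2, ∃ a b : ℝ, CD n S w i j = a • (1 : Matrix (Fin t) (Fin t) ℝ) + b • Jmat t

/-- Eigenvalues of a (Hermitian) matrix sorted increasingly with multiplicity. -/
def sortedEigs {t : ℕ} (C : Matrix (Fin t) (Fin t) ℝ) : Fin t → ℝ :=
  if h : C.IsHermitian then (fun i => h.eigenvalues (Tuple.sort h.eigenvalues i))
  else fun _ => 0

/-- `Φ_D(C) = (∏_{i=1}^{t-1} a_i)^{1/(t-1)}` (eigenvalues sorted increasingly). -/
def PhiD {t : ℕ} (C : Matrix (Fin t) (Fin t) ℝ) : ℝ :=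
  (∏ i ∈ Finset.univ.filter fun i : Fin t => (i : ℕ) ≠ 0, sortedEigs C i) ^ (((t : ℝ) - 1)⁻¹)

/-- `Φ_A(C) = (t-1)(∑_{i=1}^{t-1} a_i⁻¹)⁻¹` if `a_1 > 0`, else `0`. -/
def PhiA {t : ℕ} (C : Matrix (Fin t) (Fin t) ℝ) : ℝ :=
  if ∀ i : Fin t, (i : ℕ) ≠ 0 → 0 < sortedEigs C i then
    ((t : ℝ) - 1) *
      (∑ i ∈ Finset.univ.filter fun i : Fin t => (i : ℕ) ≠ 0, (sortedEigs C i)⁻¹)⁻¹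
  else 0

/-- `Φ_T(C) = tr(C)/(t-1)`. -/
def PhiT {t : ℕ} (C : Matrix (Fin t) (Fin t) ℝ) : ℝ := C.trace / ((t : ℝ) - 1)

/-- The criterion value `∫ Φ(C_{d,τ0,λ0}) g(dτ0)`. -/
def PhiCrit {p t : ℕ} (n : ℕ) (S : Matrix (Fin p) (Fin p) ℝ)
    (Phi : Matrix (Fin t) (Fin t) ℝ → ℝ) (g : Measure (Fin t → ℝ)) (l0 : ℝ)
    (w : TrtSeq p t → ℝ) : ℝ :=
  ∫ τ0, Phi (CInfo n S w τ0 l0) ∂g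

/-- Competing designs for a `Φ`-criterion. -/
def PhiAdmissible {p t : ℕ} (n : ℕ) (S : Matrix (Fin p) (Fin p) ℝ)
    (Phi : Matrix (Fin t) (Fin t) ℝ → ℝ) (g : Measure (Fin t → ℝ)) (l0 : ℝ)
    (w : TrtSeq p t → ℝ) : Prop :=
  IsDesign w ∧ (∀ᵐ τ0 ∂g, 0 < τ0 ⬝ᵥ (CD n S w 1 1 *ᵥ τ0)) ∧
    Integrable (fun τ0 => Phi (CInfo n S w τ0 l0)) g

/-- `d` is `Φ_{g,λ0}`-optimal. -/
def PhiOptimal {p t : ℕ} (n : ℕ) (S : Matrix (Fin p) (Fin p) ℝ)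
    (Phi : Matrix (Fin t) (Fin t) ℝ → ℝ) (g : Measure (Fin t → ℝ)) (l0 : ℝ)
    (w : TrtSeq p t → ℝ) : Prop :=
  ∀ w' : TrtSeq p t → ℝ, PhiAdmissible n S Phi g l0 w' →
    PhiCrit n S Phi g l0 w' ≤ PhiCrit n S Phi g l0 w

/-- `H_1(s) = F_s`, `H_2(s) = T_s + λ0 F_s` (for estimating `λ`). -/
def Hmat {p t : ℕ} (l0 : ℝ) (i : Fin 2) (s : TrtSeq p t) : Matrix (Fin p) (Fin t) ℝ :=
  if i = 0 then Fmat s else Tmat s + l0 • Fmat s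

/-- `Â_{sij} = B_t H_i(s)' B̃ H_j(s) B_t`. -/
def Ahat {p t : ℕ} (S : Matrix (Fin p) (Fin p) ℝ) (l0 : ℝ) (s : TrtSeq p t) (i j : Fin 2) :
    Matrix (Fin t) (Fin t) ℝ :=
  Bmat t * (Hmat l0 i s)ᵀ * Btil S * Hmat l0 j s * Bmat t

/-- `h_{sij} = tr Â_{sij}`. -/
def hseq {p t : ℕ} (S : Matrix (Fin p) (Fin p) ℝ) (l0 : ℝ) (s : TrtSeq p t) (i j : Fin 2) : ℝ :=
  (Ahat S l0 s i j).trace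

/-- `Â_{dij} = n ∑_s p_s Â_{sij}`. -/
def AhatD {p t : ℕ} (n : ℕ) (S : Matrix (Fin p) (Fin p) ℝ) (l0 : ℝ) (w : TrtSeq p t → ℝ)
    (i j : Fin 2) : Matrix (Fin t) (Fin t) ℝ :=
  (n : ℝ) • ∑ s : TrtSeq p t, w s • Ahat S l0 s i j

/-- `A_{dij} = Â_{dij} - n (∑_s p_s H_i(s) B_t)' B̃ (∑_s p_s H_j(s) B_t)`. -/
def AD {p t : ℕ} (n : ℕ) (S : Matrix (Fin p) (Fin p) ℝ) (l0 : ℝ) (w : TrtSeq p t → ℝ)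
    (i j : Fin 2) : Matrix (Fin t) (Fin t) ℝ :=
  AhatD n S l0 w i j -
    (n : ℝ) • ((∑ s : TrtSeq p t, w s • (Hmat l0 i s * Bmat t))ᵀ * Btil S *
      (∑ s : TrtSeq p t, w s • (Hmat l0 j s * Bmat t)))

/-- `G` is a generalized inverse of `A`. -/
def IsGInv {t : ℕ} (A G : Matrix (Fin t) (Fin t) ℝ) : Prop := A * G * A = A

/-- `A_d(G) = A_{d11} - A_{d12} G A_{d21}` with `A_{d21} = A_{d12}'`. -/
def ADfun {p t : ℕ} (n : ℕ) (S : Matrix (Fin p) (Fin p) ℝ) (l0 : ℝ) (w : TrtSeq p t → ℝ)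
    (G : Matrix (Fin t) (Fin t) ℝ) : Matrix (Fin t) (Fin t) ℝ :=
  AD n S l0 w 0 0 - AD n S l0 w 0 1 * G * (AD n S l0 w 0 1)ᵀ

/-- `r_s(x) = h_{s11} + 2 h_{s12} x + h_{s22} x²`. -/
def rSeq {p t : ℕ} (S : Matrix (Fin p) (Fin p) ℝ) (l0 : ℝ) (s : TrtSeq p t) (x : ℝ) : ℝ :=
  hseq S l0 s 0 0 + 2 * hseq S l0 s 0 1 * x + hseq S l0 s 1 1 * x ^ 2

/-- `r(x) = max_s r_s(x)`. -/
def rMax (p t : ℕ) (S : Matrix (Fin p) (Fin p) ℝ) (l0 : ℝ) (x : ℝ) : ℝ :=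
  sSup (Set.range fun s : TrtSeq p t => rSeq S l0 s x)

/-- `y_0 = inf_x r(x)`. -/
def yZero (p t : ℕ) (S : Matrix (Fin p) (Fin p) ℝ) (l0 : ℝ) : ℝ := ⨅ x : ℝ, rMax p t S l0 x
open scoped MatrixOrder in
lemma psd_factor {m : ℕ} {A : Matrix (Fin m) (Fin m) ℝ} (hA : A.PosSemidef) :
    ∃ R : Matrix (Fin m) (Fin m) ℝ, A = Rᵀ * R := by
  obtain ⟨R, rfl⟩ := CStarAlgebra.nonneg_iff_eq_star_mul_self.mp hA.nonneg
  exact ⟨R, by rw [Matrix.star_eq_conjTranspose, conjTranspose_eq_transpose_of_trivial]⟩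

lemma Jmat_eq (m : ℕ) : Jmat m = vecMulVec (fun _ => 1) (fun _ => 1) := by
  ext i j; simp [Jmat, vecMulVec]

lemma Btil_psd {p : ℕ} {S : Matrix (Fin p) (Fin p) ℝ} (hS : S.PosDef) :
    (Btil S).PosSemidef := by
  obtain ⟨R, hR⟩ := psd_factor hS.inv.posSemidef
  unfold Btil
  rw [hR, Jmat_eq, posSemidef_iff_dotProduct_mulVec]
  set o : Fin p → ℝ := fun _ => 1 with ho
  have key : Rᵀ * R * vecMulVec o o * (Rᵀ * R) =
      vecMulVec (Rᵀ *ᵥ (R *ᵥ o)) (Rᵀ *ᵥ (R *ᵥ o)) := by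
    rw [mul_vecMulVec, vecMulVec_mul, ← mulVec_mulVec]
    congr 1
    rw [← vecMul_vecMul, vecMul_transpose, mulVec_transpose]
  rw [key]
  constructor
  · unfold IsHermitian
    rw [conjTranspose_eq_transpose_of_trivial, transpose_sub, transpose_smul,
      transpose_mul, transpose_transpose, transpose_vecMulVec]
  · intro x
    have hd : ∀ u v : Fin p → ℝ, u ⬝ᵥ (Rᵀ *ᵥ (R *ᵥ v)) = (R *ᵥ u) ⬝ᵥ (R *ᵥ v) := by
      intro u v
      rw [dotProduct_mulVec, vecMul_transpose]
    have hcs : ((R *ᵥ x) ⬝ᵥ (R *ᵥ o)) ^ 2 ≤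
        ((R *ᵥ x) ⬝ᵥ (R *ᵥ x)) * ((R *ᵥ o) ⬝ᵥ (R *ᵥ o)) := by
      have := Finset.sum_mul_sq_le_sq_mul_sq Finset.univ (R *ᵥ x) (R *ᵥ o)
      simpa [dotProduct, sq] using this
    rw [star_trivial, sub_mulVec, smul_mulVec, vecMulVec_mulVec, dotProduct_sub,
      dotProduct_smul, ← mulVec_mulVec, ← mulVec_mulVec, hd, hd]
    have hc : (Rᵀ *ᵥ (R *ᵥ o)) ⬝ᵥ x = (R *ᵥ x) ⬝ᵥ (R *ᵥ o) := by
      rw [dotProduct_comm, hd]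
    have h0 : 0 ≤ (R *ᵥ o) ⬝ᵥ (R *ᵥ o) := by
      simp only [dotProduct]; exact Finset.sum_nonneg fun i _ => mul_self_nonneg _
    have h1 : 0 ≤ (R *ᵥ x) ⬝ᵥ (R *ᵥ x) := by
      simp only [dotProduct]; exact Finset.sum_nonneg fun i _ => mul_self_nonneg _
    simp only [op_smul_eq_smul, dotProduct_smul, hd, hc, smul_eq_mul]
    set a := (R *ᵥ x) ⬝ᵥ (R *ᵥ o)
    set b := (R *ᵥ o) ⬝ᵥ (R *ᵥ o)
    set c := (R *ᵥ x) ⬝ᵥ (R *ᵥ x)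
    rcases h0.eq_or_lt with h | h
    · rw [← h]; simpa using h1
    · rw [sub_nonneg, inv_mul_le_iff₀ h]; nlinarith

lemma Bmat_transpose (t : ℕ) : (Bmat t)ᵀ = Bmat t := by
  ext i j; simp [Bmat, Jmat, one_apply, eq_comm]

lemma Bmat_row {t : ℕ} (ht : 3 ≤ t) (i : Fin t) : ∑ j, Bmat t i j = 0 := by
  have : (t : ℝ) ≠ 0 := by positivity
  simp [Bmat, Jmat, one_apply, Finset.sum_sub_distrib, this]

lemma Bmat_trace {t : ℕ} (ht : 3 ≤ t) : (Bmat t).trace = t - 1 := by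
  have : (t : ℝ) ≠ 0 := by positivity
  simp [Bmat, Jmat, trace, Finset.sum_sub_distrib, this]

lemma Bmat_mulVec {t : ℕ} (v : Fin t → ℝ) (hv : ∑ i, v i = 0) : Bmat t *ᵥ v = v := by
  have : Jmat t *ᵥ v = 0 := by
    ext i; simp [Jmat, mulVec, dotProduct, hv]
  rw [Bmat, sub_mulVec, smul_mulVec, this]; simp

lemma Bmat_mul_self {t : ℕ} (ht : 3 ≤ t) : Bmat t * Bmat t = Bmat t := by
  have h : ∀ v : Fin t → ℝ, Bmat t *ᵥ (Bmat t *ᵥ v) = Bmat t *ᵥ v := by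
    intro v
    apply Bmat_mulVec
    have := Bmat_row ht
    simp only [mulVec, dotProduct]
    rw [Finset.sum_comm]
    apply Finset.sum_eq_zero
    intro j _
    rw [← Finset.sum_mul]
    have h2 : ∑ i, Bmat t i j = ∑ i, Bmat t j i :=
      Finset.sum_congr rfl fun i _ => congrFun (congrFun (Bmat_transpose t) j) i
    rw [h2, this, zero_mul]
  apply Matrix.ext_of_mulVec_single
  intro i
  rw [← mulVec_mulVec, h]

lemma Bmat_submatrix {t : ℕ} (σ : Equiv.Perm (Fin t)) :
    (Bmat t).submatrix σ σ = Bmat t := by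
  ext i j; simp [Bmat, Jmat, one_apply]

lemma Bmat_psd {t : ℕ} (ht : 3 ≤ t) : (Bmat t).PosSemidef := by
  have := posSemidef_conjTranspose_mul_self (Bmat t)
  rwa [conjTranspose_eq_transpose_of_trivial, Bmat_transpose, Bmat_mul_self ht] at this

/-- Permutation invariant matrices with zero row sums are multiples of `B_t`. -/
lemma inv_eq_smul_B {t : ℕ} (ht : 3 ≤ t) (M : Matrix (Fin t) (Fin t) ℝ)
    (hinv : ∀ (σ : Equiv.Perm (Fin t)) i j, M (σ i) (σ j) = M i j)
    (hrow : ∀ i, ∑ j, M i j = 0) : M = (M.trace / ((t : ℝ) - 1)) • Bmat t := by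
  have ht0 : (t : ℝ) ≠ 0 := by positivity
  have ht1 : (t : ℝ) - 1 ≠ 0 := by
    have : (3 : ℝ) ≤ t := by exact_mod_cast ht
    linarith
  have hdiag : ∀ i j, M i i = M j j := by
    intro i j
    have := hinv (Equiv.swap i j) i i
    rw [Equiv.swap_apply_left] at this
    exact this.symm
  have htr : ∀ i, M.trace = t * M i i := by
    intro i
    rw [trace, Finset.sum_congr rfl fun j _ => (show M.diag j = M i i from hdiag j i)]
    simp
  have hoff : ∀ i j, i ≠ j → M i i + ((t : ℝ) - 1) * M i j = 0 := by
    intro i j hij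
    have h1 : ∀ k ∈ Finset.univ.erase i, M i k = M i j := by
      intro k hk
      have hk' : k ≠ i := (Finset.mem_erase.mp hk).1
      have := hinv (Equiv.swap j k) i j
      rw [Equiv.swap_apply_left, Equiv.swap_apply_of_ne_of_ne hij hk'.symm] at this
      exact this
    have h2 := hrow i
    rw [← Finset.add_sum_erase _ _ (Finset.mem_univ i), Finset.sum_congr rfl h1] at h2
    rw [Finset.sum_const, Finset.card_erase_of_mem (Finset.mem_univ i), Finset.card_univ,
      Fintype.card_fin, nsmul_eq_mul, Nat.cast_sub (by omega)] at h2
    simpa using h2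
  ext i j
  rw [htr i]
  by_cases h : i = j
  · subst h
    simp [Bmat, Jmat]; field_simp
  · have := hoff i j h
    simp [Bmat, Jmat, one_apply, h]
    field_simp
    linarith

lemma Smat_conj {t : ℕ} (σ : Equiv.Perm (Fin t)) (C : Matrix (Fin t) (Fin t) ℝ) :
    (Smat σ)ᵀ * C * Smat σ = C.submatrix σ.symm σ.symm := by
  ext i j
  have h1 : ∀ i x : Fin t, (i = σ x) ↔ (x = σ.symm i) := by
    intro i x; rw [Equiv.eq_symm_apply, eq_comm]
  simp [Smat, mul_apply, h1]

lemma Phi_avg {t : ℕ} (ht : 3 ≤ t) (Phi : Matrix (Fin t) (Fin t) ℝ → ℝ)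
    (hconc : ∀ A B : Matrix (Fin t) (Fin t) ℝ, A.PosSemidef → B.PosSemidef →
        ∀ a b : ℝ, 0 ≤ a → 0 ≤ b → a + b = 1 →
          a * Phi A + b * Phi B ≤ Phi (a • A + b • B))
    (hperm : ∀ (σ : Equiv.Perm (Fin t)) (C : Matrix (Fin t) (Fin t) ℝ), C.PosSemidef →
        Phi ((Smat σ)ᵀ * C * Smat σ) = Phi C)
    (C : Matrix (Fin t) (Fin t) ℝ) (hC : C.PosSemidef) (hrow : ∀ i, ∑ j, C i j = 0) :
    Phi C ≤ Phi ((C.trace / ((t : ℝ) - 1)) • Bmat t) := by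
  have hcv : ConcaveOn ℝ {A : Matrix (Fin t) (Fin t) ℝ | A.PosSemidef} Phi := by
    refine ⟨?_, ?_⟩
    · intro A hA B hB a b ha hb _
      exact (hA.smul ha).add (hB.smul hb)
    · intro A hA B hB a b ha hb hab
      exact hconc A B hA hB a b ha hb hab
  have hN : (0 : ℝ) < (Fintype.card (Equiv.Perm (Fin t)) : ℝ) := by
    exact_mod_cast Fintype.card_pos
  set N : ℝ := (Fintype.card (Equiv.Perm (Fin t)) : ℝ) with hNdef
  have hJ := hcv.le_map_sum (t := (Finset.univ : Finset (Equiv.Perm (Fin t))))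
    (w := fun _ => N⁻¹) (p := fun σ => (Smat σ)ᵀ * C * Smat σ)
    (fun _ _ => by positivity) (by simp [← hNdef, hN.ne'])
    (fun σ _ => by
      show Matrix.PosSemidef _
      rw [Smat_conj]; exact hC.submatrix _)
  have hsum : ∑ σ : Equiv.Perm (Fin t), N⁻¹ • Phi ((Smat σ)ᵀ * C * Smat σ) = Phi C := by
    rw [Finset.sum_congr rfl fun σ _ => by rw [hperm σ C hC]]
    rw [Finset.sum_const, Finset.card_univ, nsmul_eq_mul, ← hNdef, smul_eq_mul]
    field_simp
  rw [hsum] at hJ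
  refine hJ.trans (le_of_eq ?_)
  congr 1
  set M := ∑ σ : Equiv.Perm (Fin t), N⁻¹ • ((Smat σ)ᵀ * C * Smat σ) with hM
  have hMe : ∀ i j, M i j = ∑ σ : Equiv.Perm (Fin t), N⁻¹ * C (σ.symm i) (σ.symm j) := by
    intro i j
    rw [hM, Matrix.sum_apply]
    refine Finset.sum_congr rfl fun σ _ => ?_
    rw [Smat_conj]; rfl
  have htr : M.trace = C.trace := by
    have : ∀ σ : Equiv.Perm (Fin t), ((Smat σ)ᵀ * C * Smat σ).trace = C.trace := by
      intro σ
      rw [Smat_conj]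
      exact Equiv.sum_comp σ.symm (fun i => C i i)
    rw [hM, trace_sum]
    simp only [trace_smul, this]
    rw [Finset.sum_const, Finset.card_univ, nsmul_eq_mul, ← hNdef, smul_eq_mul]
    field_simp
  rw [← htr]
  apply inv_eq_smul_B ht
  · intro τ i j
    rw [hMe, hMe]
    rw [← Equiv.sum_comp (Equiv.mulLeft τ)]
    refine Finset.sum_congr rfl fun σ _ => ?_
    have h : ∀ k, (Equiv.mulLeft τ σ).symm (τ k) = σ.symm k := by
      intro k
      rw [Equiv.symm_apply_eq]; simp
    rw [h, h]
  · intro i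
    simp only [hMe]
    rw [Finset.sum_comm]
    refine Finset.sum_eq_zero fun σ _ => ?_
    rw [← Finset.mul_sum, Equiv.sum_comp σ.symm (fun j => C (σ.symm i) j), hrow, mul_zero]

def muD {p t : ℕ} (w : TrtSeq p t → ℝ) (i : Fin 2) : Matrix (Fin p) (Fin t) ℝ :=
  ∑ s : TrtSeq p t, w s • (Gmat i s * Bmat t)

lemma Chat_eq {p t : ℕ} (S : Matrix (Fin p) (Fin p) ℝ) (s : TrtSeq p t) (i j : Fin 2) :
    Chat S s i j = (Gmat i s * Bmat t)ᵀ * Btil S * (Gmat j s * Bmat t) := by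
  rw [Chat, transpose_mul, Bmat_transpose]
  simp only [Matrix.mul_assoc]

lemma CD_eq {p t : ℕ} (n : ℕ) (S : Matrix (Fin p) (Fin p) ℝ) (w : TrtSeq p t → ℝ)
    (i j : Fin 2) : CD n S w i j = ChatD n S w i j -
      (n : ℝ) • ((muD w i)ᵀ * Btil S * muD w j) := rfl

lemma CD_centered {p t : ℕ} (n : ℕ) (S : Matrix (Fin p) (Fin p) ℝ) (w : TrtSeq p t → ℝ)
    (hw : IsDesign w) (i j : Fin 2) :
    CD n S w i j = (n : ℝ) • ∑ s : TrtSeq p t, w s •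
      ((Gmat i s * Bmat t - muD w i)ᵀ * Btil S * (Gmat j s * Bmat t - muD w j)) := by
  rw [CD_eq, ChatD, ← smul_sub]
  congr 1
  have e : ∀ s : TrtSeq p t, w s •
      ((Gmat i s * Bmat t - muD w i)ᵀ * Btil S * (Gmat j s * Bmat t - muD w j)) =
      w s • Chat S s i j - (muD w i)ᵀ * Btil S * (w s • (Gmat j s * Bmat t))
      - (w s • (Gmat i s * Bmat t))ᵀ * Btil S * muD w j
      + w s • ((muD w i)ᵀ * Btil S * muD w j) := by
    intro s
    rw [Chat_eq]
    generalize Gmat i s * Bmat t = X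
    generalize Gmat j s * Bmat t = Y
    simp only [transpose_sub, transpose_smul, Matrix.sub_mul, Matrix.mul_sub, smul_sub,
      Matrix.mul_smul, Matrix.smul_mul]
    abel
  rw [Finset.sum_congr rfl fun s _ => e s]
  rw [Finset.sum_add_distrib, Finset.sum_sub_distrib, Finset.sum_sub_distrib,
    ← Finset.sum_smul, hw.2, one_smul, ← Matrix.mul_sum, ← Matrix.sum_mul, ← Matrix.sum_mul,
    ← transpose_sum]
  change _ = _ - (muD w i)ᵀ * Btil S * muD w j - (muD w i)ᵀ * Btil S * muD w j + _
  abel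

lemma CD_factor {p t : ℕ} (n : ℕ) {S : Matrix (Fin p) (Fin p) ℝ} (hS : S.PosDef)
    (w : TrtSeq p t → ℝ) (hw : IsDesign w) :
    ∃ M : Fin 2 → Matrix (TrtSeq p t × Fin p) (Fin t) ℝ,
      ∀ i j, CD n S w i j = (M i)ᵀ * M j := by
  obtain ⟨R, hR⟩ := psd_factor (Btil_psd hS)
  refine ⟨fun i => Matrix.of fun sk l =>
    Real.sqrt (n * w sk.1) * (R * (Gmat i sk.1 * Bmat t - muD w i)) sk.2 l, ?_⟩
  intro i j
  rw [CD_centered n S w hw, hR]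
  ext a b
  rw [Matrix.smul_apply, Matrix.sum_apply, mul_apply, Fintype.sum_prod_type, smul_eq_mul,
    Finset.mul_sum]
  refine Finset.sum_congr rfl fun s _ => ?_
  have h : (Gmat i s * Bmat t - muD w i)ᵀ * (Rᵀ * R) * (Gmat j s * Bmat t - muD w j) =
      (R * (Gmat i s * Bmat t - muD w i))ᵀ * (R * (Gmat j s * Bmat t - muD w j)) := by
    rw [transpose_mul]; simp only [Matrix.mul_assoc]
  rw [h, Matrix.smul_apply, mul_apply, smul_eq_mul, ← mul_assoc, Finset.mul_sum]
  refine Finset.sum_congr rfl fun k _ => ?_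
  have hs := Real.mul_self_sqrt (mul_nonneg (Nat.cast_nonneg n) (hw.1 s) : (0:ℝ) ≤ n * w s)
  simp only [transpose_apply, of_apply]
  linear_combination (-(R * (Gmat i s * Bmat t - muD w i)) k a *
    (R * (Gmat j s * Bmat t - muD w j)) k b) * hs

lemma mul_B_row {t m : ℕ} (ht : 3 ≤ t) (A : Matrix (Fin m) (Fin t) ℝ) (i : Fin m) :
    ∑ j, (A * Bmat t) i j = 0 := by
  simp only [mul_apply]
  rw [Finset.sum_comm]
  refine Finset.sum_eq_zero fun k _ => ?_
  rw [← Finset.mul_sum, Bmat_row ht, mul_zero]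

lemma muD_eq {p t : ℕ} (w : TrtSeq p t → ℝ) (i : Fin 2) :
    muD w i = (∑ s, w s • Gmat i s) * Bmat t := by
  rw [muD, Matrix.sum_mul]; simp only [Matrix.smul_mul]

lemma ChatD_eq {p t : ℕ} (n : ℕ) (S : Matrix (Fin p) (Fin p) ℝ) (w : TrtSeq p t → ℝ)
    (i j : Fin 2) : ∃ A, ChatD n S w i j = A * Bmat t := by
  refine ⟨(n : ℝ) • ∑ s : TrtSeq p t, w s • (Bmat t * (Gmat i s)ᵀ * Btil S * Gmat j s), ?_⟩
  rw [Matrix.smul_mul, Matrix.sum_mul]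
  simp only [Matrix.smul_mul]
  rfl

lemma CD_row {p t : ℕ} (ht : 3 ≤ t) (n : ℕ) (S : Matrix (Fin p) (Fin p) ℝ)
    (w : TrtSeq p t → ℝ) (i j : Fin 2) (a : Fin t) : ∑ b, CD n S w i j a b = 0 := by
  obtain ⟨A, hA⟩ := ChatD_eq n S w i j
  have : CD n S w i j = (A - (n : ℝ) • ((muD w i)ᵀ * Btil S * (∑ s, w s • Gmat j s))) * Bmat t := by
    rw [CD_eq, hA, muD_eq w j, Matrix.sub_mul, Matrix.smul_mul]
    simp only [Matrix.mul_assoc]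
  rw [this]
  exact mul_B_row ht _ a

lemma row_mul {t m : ℕ} (A : Matrix (Fin m) (Fin t) ℝ) (C : Matrix (Fin t) (Fin t) ℝ)
    (hC : ∀ i, ∑ j, C i j = 0) (i : Fin m) : ∑ j, (A * C) i j = 0 := by
  simp only [mul_apply]
  rw [Finset.sum_comm]
  refine Finset.sum_eq_zero fun k _ => ?_
  rw [← Finset.mul_sum, hC, mul_zero]

lemma cD_comm {p t : ℕ} (n : ℕ) {S : Matrix (Fin p) (Fin p) ℝ} (hS : S.PosDef)
    (w : TrtSeq p t → ℝ) (i j : Fin 2) : cD n S w i j = cD n S w j i := by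
  have hB : (Btil S)ᵀ = Btil S := by
    have := (Btil_psd hS).1
    rwa [IsHermitian, conjTranspose_eq_transpose_of_trivial] at this
  have : ChatD n S w i j = (ChatD n S w j i)ᵀ := by
    rw [ChatD, ChatD, transpose_smul, transpose_sum]
    congr 1
    refine Finset.sum_congr rfl fun s _ => ?_
    rw [transpose_smul, Chat_eq, Chat_eq]
    simp only [transpose_mul, transpose_transpose, hB, Matrix.mul_assoc]
  rw [cD, cD, this, trace_transpose]

lemma trace_psd {p t : ℕ} {S : Matrix (Fin p) (Fin p) ℝ} (hS : S.PosDef)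
    (X : Matrix (Fin p) (Fin t) ℝ) : 0 ≤ (Xᵀ * Btil S * X).trace := by
  have := (Btil_psd hS).conjTranspose_mul_mul_same X
  rw [conjTranspose_eq_transpose_of_trivial] at this
  exact this.trace_nonneg

lemma cD_nonneg {p t : ℕ} (n : ℕ) {S : Matrix (Fin p) (Fin p) ℝ} (hS : S.PosDef)
    (w : TrtSeq p t → ℝ) (hw : IsDesign w) (i : Fin 2) : 0 ≤ cD n S w i i := by
  rw [cD, ChatD, trace_smul, trace_sum]
  refine mul_nonneg (Nat.cast_nonneg n) (Finset.sum_nonneg fun s _ => ?_)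
  rw [trace_smul, Chat_eq]
  exact mul_nonneg (hw.1 s) (trace_psd hS _)

/-- Basic facts on the traditional information matrix. -/
lemma trad_info {p t : ℕ} (ht : 3 ≤ t) (n : ℕ) {S : Matrix (Fin p) (Fin p) ℝ} (hS : S.PosDef)
    (w : TrtSeq p t → ℝ) (hw : IsDesign w) (G : Matrix (Fin t) (Fin t) ℝ)
    (hG : IsGInv (CD n S w 1 1) G) :
    (CD n S w 0 0 - CD n S w 0 1 * G * CD n S w 1 0).PosSemidef ∧
    (∀ a, ∑ b, (CD n S w 0 0 - CD n S w 0 1 * G * CD n S w 1 0) a b = 0) ∧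
    ∀ x : ℝ, (CD n S w 0 0 - CD n S w 0 1 * G * CD n S w 1 0).trace ≤
      cD n S w 0 0 + 2 * cD n S w 0 1 * x + cD n S w 1 1 * x ^ 2 := by
  obtain ⟨M, hM⟩ := CD_factor n hS w hw
  have hrow : ∀ a, ∑ b, (CD n S w 0 0 - CD n S w 0 1 * G * CD n S w 1 0) a b = 0 := by
    intro a
    simp only [Matrix.sub_apply, Finset.sum_sub_distrib]
    rw [CD_row ht, row_mul _ _ (CD_row ht n S w 1 0)]; simp
  have hbound : ∀ x : ℝ, (CD n S w 0 0 + x • (CD n S w 0 1 + CD n S w 1 0)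
      + x ^ 2 • CD n S w 1 1).trace ≤
      cD n S w 0 0 + 2 * cD n S w 0 1 * x + cD n S w 1 1 * x ^ 2 := by
    intro x
    have h0 := mul_nonneg (Nat.cast_nonneg (α := ℝ) n) (trace_psd hS (muD w 0 + x • muD w 1))
    have h10 := cD_comm n hS w 1 0
    simp only [CD_eq, trace_add, trace_sub, trace_smul, smul_eq_mul, ← cD.eq_def]
    simp only [transpose_add, transpose_smul, Matrix.add_mul, Matrix.mul_add, Matrix.smul_mul,
      Matrix.mul_smul, trace_add, trace_smul, smul_eq_mul] at h0
    rw [h10]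
    nlinarith
  set Z := G * CD n S w 1 0 with hZ
  have hGT : (M 1)ᵀ * M 1 * G * ((M 1)ᵀ) = (M 1)ᵀ := by
    have h1 : CD n S w 1 1 * G * CD n S w 1 1 = CD n S w 1 1 := hG
    rw [hM] at h1
    have h2 := congrArg transpose h1
    simp only [transpose_mul, transpose_transpose] at h2
    have h3 : (M 1)ᴴ * M 1 * (Gᵀ * ((M 1)ᵀ * M 1) - 1) = 0 := by
      rw [conjTranspose_eq_transpose_of_trivial, Matrix.mul_sub, h2, Matrix.mul_one, sub_self]
    rw [conjTranspose_mul_self_mul_eq_zero, Matrix.mul_sub, Matrix.mul_one, sub_eq_zero] at h3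
    have h4 := congrArg transpose h3
    simpa only [transpose_mul, transpose_transpose, Matrix.mul_assoc] using h4
  have hCZ : (M 1)ᵀ * M 1 * Z = (M 1)ᵀ * M 0 := by
    rw [hZ, hM 1 0, ← Matrix.mul_assoc, ← Matrix.mul_assoc, hGT]
  have hC : CD n S w 0 0 - CD n S w 0 1 * G * CD n S w 1 0 =
      (M 0)ᵀ * M 0 - Zᵀ * ((M 1)ᵀ * M 1) * Z := by
    rw [Matrix.mul_assoc (CD n S w 0 1), ← hZ, hM, hM]
    have := congrArg transpose hCZ
    simp only [transpose_mul, transpose_transpose] at this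
    rw [this]
  have hCT : Zᵀ * ((M 1)ᵀ * M 1) = (M 0)ᵀ * M 1 := by
    have := congrArg transpose hCZ
    simpa only [transpose_mul, transpose_transpose] using this
  refine ⟨?_, hrow, ?_⟩
  · have h := posSemidef_conjTranspose_mul_self (M 0 - M 1 * Z)
    rw [conjTranspose_eq_transpose_of_trivial] at h
    rw [hC]
    convert h using 1
    rw [transpose_sub, transpose_mul (M 1) Z, Matrix.sub_mul, Matrix.mul_sub, Matrix.mul_sub]
    have e1 : (M 0)ᵀ * (M 1 * Z) = Zᵀ * ((M 1)ᵀ * M 1) * Z := by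
      rw [hCT, Matrix.mul_assoc]
    have e2 : Zᵀ * (M 1)ᵀ * M 0 = Zᵀ * ((M 1)ᵀ * M 1) * Z := by
      rw [Matrix.mul_assoc, ← hCZ]; simp only [Matrix.mul_assoc]
    have e3 : Zᵀ * (M 1)ᵀ * (M 1 * Z) = Zᵀ * ((M 1)ᵀ * M 1) * Z := by
      simp only [Matrix.mul_assoc]
    rw [e1, e2, e3]; abel
  · intro x
    refine le_trans ?_ (hbound x)
    have h := posSemidef_conjTranspose_mul_self (M 1 * Z + x • M 1)
    rw [conjTranspose_eq_transpose_of_trivial] at h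
    have h' := h.trace_nonneg
    have e : (M 1 * Z + x • M 1)ᵀ * (M 1 * Z + x • M 1) =
        (CD n S w 0 0 + x • (CD n S w 0 1 + CD n S w 1 0) + x ^ 2 • CD n S w 1 1) -
        (CD n S w 0 0 - CD n S w 0 1 * G * CD n S w 1 0) := by
      rw [hC, hM 0 0, hM 0 1, hM 1 0, hM 1 1, ← hCZ, ← hCT]
      simp only [transpose_add, transpose_smul, transpose_mul, Matrix.add_mul, Matrix.mul_add,
        Matrix.smul_mul, Matrix.mul_smul, smul_add, smul_smul, Matrix.mul_assoc, pow_two]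
      abel
    rw [e, trace_sub] at h'
    linarith

/-- All `C_{dij}` are the multiples `c_{dij}/(t-1)` of `B_t`. -/
def NiceD {p t : ℕ} (n : ℕ) (S : Matrix (Fin p) (Fin p) ℝ) (w : TrtSeq p t → ℝ) : Prop :=
  ∀ i j : Fin 2, CD n S w i j = (cD n S w i j / ((t : ℝ) - 1)) • Bmat t

lemma CD_eq_ChatD {p t : ℕ} (ht : 3 ≤ t) (n : ℕ) (S : Matrix (Fin p) (Fin p) ℝ)
    (w : TrtSeq p t → ℝ)
    (h : ∀ (i : Fin 2) (k : Fin p) (a b : Fin t),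
      ∑ s, w s * Gmat i s k a = ∑ s, w s * Gmat i s k b) (i j : Fin 2) :
    CD n S w i j = ChatD n S w i j := by
  have hmu : muD w j = 0 := by
    rw [muD_eq]
    ext k a
    rw [mul_apply]
    have e : ∀ b, (∑ s, w s • Gmat j s) k b = (∑ s, w s • Gmat j s) k a := by
      intro b
      simp only [Matrix.sum_apply, Matrix.smul_apply, smul_eq_mul]
      exact h j k b a
    simp only [e]
    rw [← Finset.mul_sum]
    have : ∑ b, Bmat t b a = ∑ b, Bmat t a b :=
      Finset.sum_congr rfl fun b _ => congrFun (congrFun (Bmat_transpose t) a) b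
    rw [this, Bmat_row ht, mul_zero]; rfl
  rw [CD_eq, hmu]; simp

lemma nice_of {p t : ℕ} (ht : 3 ≤ t) (n : ℕ) (S : Matrix (Fin p) (Fin p) ℝ)
    (w : TrtSeq p t → ℝ)
    (h : ∀ (i : Fin 2) (k : Fin p) (a b : Fin t),
      ∑ s, w s * Gmat i s k a = ∑ s, w s * Gmat i s k b)
    (hinv : ∀ (i j : Fin 2) (σ : Equiv.Perm (Fin t)) a b,
      CD n S w i j (σ a) (σ b) = CD n S w i j a b) : NiceD n S w := by
  intro i j
  have h1 := inv_eq_smul_B ht (CD n S w i j) (hinv i j) (CD_row ht n S w i j)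
  have h2 : (CD n S w i j).trace = cD n S w i j := by
    rw [CD_eq_ChatD ht n S w h]; rfl
  rw [h2] at h1
  exact h1

lemma nice_pseudo {p t : ℕ} (ht : 3 ≤ t) (n : ℕ) (S : Matrix (Fin p) (Fin p) ℝ)
    (w : TrtSeq p t → ℝ) (hps : IsPseudoSymmetric n S w) : NiceD n S w := by
  apply nice_of ht
  · intro i k a b
    have hT : ∀ (k : Fin p) (a : Fin t), ∑ s : TrtSeq p t, w s * (if s k = a then 1 else 0)
        = 1 / (t : ℝ) := by
      intro k a
      rw [← hps.1 k a, Finset.sum_filter]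
      simp
    have : ∀ a, ∑ s : TrtSeq p t, w s * Gmat i s k a =
        if i = 0 then 1 / (t : ℝ) else if (k : ℕ) = 0 then 0 else 1 / (t : ℝ) := by
      intro a
      by_cases hi : i = 0
      · simp only [Gmat, hi, if_true, Tmat, of_apply]
        exact hT k a
      · by_cases hk : (k : ℕ) = 0
        · simp [Gmat, hi, Fmat, hk]
        · simp only [Gmat, hi, if_false, Fmat, of_apply, hk]
          exact hT _ a
    rw [this, this]
  · intro i j σ a b
    obtain ⟨x, y, h⟩ := hps.2 i j
    rw [h]
    simp [Jmat, one_apply]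

lemma Gmat_perm {p t : ℕ} (i : Fin 2) (σ : Equiv.Perm (Fin t)) (s : TrtSeq p t) (k : Fin p)
    (a : Fin t) : Gmat i (permSeq σ s) k (σ a) = Gmat i s k a := by
  by_cases hi : i = 0
  · simp [Gmat, hi, Tmat, permSeq]
  · simp [Gmat, hi, Fmat, permSeq]

lemma GB_perm {p t : ℕ} (i : Fin 2) (σ : Equiv.Perm (Fin t)) (s : TrtSeq p t) :
    (Gmat i (permSeq σ s) * Bmat t).submatrix id σ = Gmat i s * Bmat t := by
  rw [← submatrix_mul_equiv (e₂ := σ), Bmat_submatrix]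
  congr 1
  ext k a
  exact Gmat_perm i σ s k a

lemma Chat_perm {p t : ℕ} (S : Matrix (Fin p) (Fin p) ℝ) (i j : Fin 2)
    (σ : Equiv.Perm (Fin t)) (s : TrtSeq p t) :
    (Chat S (permSeq σ s) i j).submatrix σ σ = Chat S s i j := by
  rw [Chat_eq, Chat_eq, ← GB_perm i σ s, ← GB_perm j σ s]
  rfl

lemma cseq_perm {p t : ℕ} (S : Matrix (Fin p) (Fin p) ℝ) (i j : Fin 2)
    (σ : Equiv.Perm (Fin t)) (s : TrtSeq p t) :
    cseq S (permSeq σ s) i j = cseq S s i j := by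
  rw [cseq, cseq, ← Chat_perm S i j σ s]
  exact (Equiv.sum_comp σ (fun a => Chat S (permSeq σ s) i j a a)).symm

def permEquiv {p t : ℕ} (σ : Equiv.Perm (Fin t)) : TrtSeq p t ≃ TrtSeq p t where
  toFun := permSeq σ
  invFun := permSeq σ⁻¹
  left_inv := fun s => by ext k; simp [permSeq]
  right_inv := fun s => by ext k; simp [permSeq]

lemma nice_symm {p t : ℕ} (ht : 3 ≤ t) (n : ℕ) (S : Matrix (Fin p) (Fin p) ℝ)
    (u : TrtSeq p t → ℝ) (hu : IsSymmetricDesign u) : NiceD n S u := by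
  have hmean : ∀ (i : Fin 2) (k : Fin p) (σ : Equiv.Perm (Fin t)) (a : Fin t),
      ∑ s, u s * Gmat i s k (σ a) = ∑ s, u s * Gmat i s k a := by
    intro i k σ a
    rw [← Equiv.sum_comp (permEquiv σ)]
    refine Finset.sum_congr rfl fun s _ => ?_
    change u (permSeq σ s) * Gmat i (permSeq σ s) k (σ a) = _
    rw [hu, Gmat_perm]
  have h : ∀ (i : Fin 2) (k : Fin p) (a b : Fin t),
      ∑ s, u s * Gmat i s k a = ∑ s, u s * Gmat i s k b := by
    intro i k a b
    have := hmean i k (Equiv.swap a b) b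
    rwa [Equiv.swap_apply_right] at this
  apply nice_of ht n S u h
  intro i j σ a b
  rw [CD_eq_ChatD ht n S u h]
  simp only [ChatD, Matrix.smul_apply, Matrix.sum_apply]
  congr 1
  rw [← Equiv.sum_comp (permEquiv σ)]
  refine Finset.sum_congr rfl fun s _ => ?_
  change u (permSeq σ s) • Chat S (permSeq σ s) i j (σ a) (σ b) = _
  rw [hu, ← Chat_perm S i j σ s]
  rfl

lemma symmetrize_symm {p t : ℕ} (v : TrtSeq p t → ℝ) : IsSymmetricDesign (symmetrize v) := by
  intro τ s
  simp only [symmetrize]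
  congr 1
  rw [← Equiv.sum_comp (Equiv.mulLeft τ)]
  refine Finset.sum_congr rfl fun σ _ => ?_
  simp only [permDesign]
  congr 1
  ext k
  simp [permSeq]

lemma symmetrize_sum {p t : ℕ} (v : TrtSeq p t → ℝ) (f : TrtSeq p t → ℝ)
    (hf : ∀ (σ : Equiv.Perm (Fin t)) s, f (permSeq σ s) = f s) :
    ∑ s, symmetrize v s * f s = ∑ s, v s * f s := by
  have hN : ((Nat.factorial t : ℕ) : ℝ) ≠ 0 := by exact_mod_cast Nat.factorial_ne_zero t
  have h1 : ∀ σ : Equiv.Perm (Fin t), ∑ s, permDesign σ v s * f s = ∑ s, v s * f s := by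
    intro σ
    rw [← Equiv.sum_comp (permEquiv σ)]
    refine Finset.sum_congr rfl fun s _ => ?_
    change v ((permEquiv σ).symm (permEquiv σ s)) * f (permSeq σ s) = _
    rw [Equiv.symm_apply_apply, hf]
  simp only [symmetrize, mul_assoc, Finset.sum_mul]
  rw [← Finset.mul_sum, Finset.sum_comm, Finset.sum_congr rfl fun σ _ => h1 σ,
    Finset.sum_const, Finset.card_univ, Fintype.card_perm, Fintype.card_fin, nsmul_eq_mul]
  field_simp

lemma symmetrize_design {p t : ℕ} (v : TrtSeq p t → ℝ) (hv : IsDesign v) :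
    IsDesign (symmetrize v) := by
  constructor
  · intro s
    exact mul_nonneg (by positivity) (Finset.sum_nonneg fun σ _ => hv.1 _)
  · have := symmetrize_sum v (fun _ => 1) (fun _ _ => rfl)
    simpa [hv.2] using this

lemma cD_eq {p t : ℕ} (n : ℕ) (S : Matrix (Fin p) (Fin p) ℝ) (v : TrtSeq p t → ℝ)
    (i j : Fin 2) : cD n S v i j = n * ∑ s, v s * cseq S s i j := by
  rw [cD, ChatD, trace_smul, trace_sum]
  simp only [trace_smul, smul_eq_mul]; rfl

lemma cD_symmetrize {p t : ℕ} (n : ℕ) (S : Matrix (Fin p) (Fin p) ℝ) (v : TrtSeq p t → ℝ)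
    (i j : Fin 2) : cD n S (symmetrize v) i j = cD n S v i j := by
  rw [cD_eq, cD_eq, symmetrize_sum v _ (fun σ s => cseq_perm S i j σ s)]

lemma mD_nice {p t : ℕ} (ht : 3 ≤ t) (n : ℕ) {S : Matrix (Fin p) (Fin p) ℝ} (hS : S.PosDef)
    (w : TrtSeq p t → ℝ) (hn : NiceD n S w) (hc : 0 < cD n S w 1 1) (l0 : ℝ)
    (τ : Fin t → ℝ) (hτ : ∑ i, τ i = 0) (hτ0 : τ ≠ 0) :
    0 < τ ⬝ᵥ (CD n S w 1 1 *ᵥ τ) ∧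
    mD n S w l0 τ =
      (cD n S w 0 0 - cD n S w 0 1 ^ 2 / cD n S w 1 1) / ((t : ℝ) - 1) := by
  have ht1 : (0 : ℝ) < (t : ℝ) - 1 := by
    have : (3 : ℝ) ≤ t := by exact_mod_cast ht
    linarith
  have hττ : 0 < τ ⬝ᵥ τ := by
    have h0 : 0 ≤ τ ⬝ᵥ τ := by
      simp only [dotProduct]; exact Finset.sum_nonneg fun i _ => mul_self_nonneg _
    refine lt_of_le_of_ne h0 fun h => hτ0 (dotProduct_self_eq_zero.mp h.symm)
  have h10 := cD_comm n hS w 1 0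
  have hq : τ ⬝ᵥ (CD n S w 1 1 *ᵥ τ) = cD n S w 1 1 / ((t : ℝ) - 1) * (τ ⬝ᵥ τ) := by
    rw [hn, smul_mulVec, Bmat_mulVec τ hτ, dotProduct_smul, smul_eq_mul]
  have hpos : 0 < τ ⬝ᵥ (CD n S w 1 1 *ᵥ τ) := by rw [hq]; positivity
  refine ⟨hpos, ?_⟩
  have H00 := hn 0 0
  have H01 := hn 0 1
  have H10 := hn 1 0
  have H11 := hn 1 1
  rw [h10] at H10
  clear h10 hn
  set a := cD n S w 0 0
  set b := cD n S w 0 1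
  set c := cD n S w 1 1
  set r := (t : ℝ) - 1
  clear_value a b c r
  have hform : ∀ l : Fin t → ℝ, ∑ i, l i = 0 → l ⬝ᵥ l = 1 →
      l ⬝ᵥ (CInfo n S w τ l0 *ᵥ l) =
        (a + 2 * l0 * b + l0 ^ 2 * c) / r -
          (b + l0 * c) ^ 2 / (c * r) * ((l ⬝ᵥ τ) ^ 2 / (τ ⬝ᵥ τ)) := by
    intro l hl hl1
    have hBv : Bmat t * vecMulVec τ τ * Bmat t = vecMulVec τ τ := by
      rw [mul_vecMulVec, vecMulVec_mul, Bmat_mulVec τ hτ, ← mulVec_transpose, Bmat_transpose,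
        Bmat_mulVec τ hτ]
    have hCI : CInfo n S w τ l0 = ((a + 2 * l0 * b + l0 ^ 2 * c) / r) • Bmat t -
        ((c / r * (τ ⬝ᵥ τ))⁻¹ * ((b + l0 * c) / r) ^ 2) • vecMulVec τ τ := by
      rw [CInfo, hq, H00, H01, H10, H11]
      have e : (b / r) • Bmat t + l0 • (c / r) • Bmat t = ((b + l0 * c) / r) • Bmat t := by
        rw [smul_smul, ← add_smul]; congr 1; ring
      rw [e, Matrix.smul_mul, Matrix.smul_mul, Matrix.mul_smul, hBv]
      congr 1
      · simp only [smul_smul, ← add_smul]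
        congr 1
        field_simp
        ring
      · simp only [smul_smul]
        congr 1
        ring
    rw [hCI, sub_mulVec, smul_mulVec, smul_mulVec, Bmat_mulVec l hl, vecMulVec_mulVec,
      dotProduct_sub, dotProduct_smul, dotProduct_smul, hl1, op_smul_eq_smul, dotProduct_smul,
      dotProduct_comm τ l]
    simp only [smul_eq_mul]
    field_simp
  apply IsLeast.csInf_eq
  constructor
  · set k := (Real.sqrt (τ ⬝ᵥ τ))⁻¹ with hk
    have hk2 : k * k * (τ ⬝ᵥ τ) = 1 := by
      have := Real.mul_self_sqrt hττ.le
      have hs : 0 < Real.sqrt (τ ⬝ᵥ τ) := Real.sqrt_pos.mpr hττ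
      rw [hk, ← mul_inv, this, inv_mul_cancel₀ hττ.ne']
    have hl0 : ∑ i, (k • τ) i = 0 := by
      simp only [Pi.smul_apply, smul_eq_mul, ← Finset.mul_sum, hτ, mul_zero]
    have hl1 : (k • τ) ⬝ᵥ (k • τ) = 1 := by
      rw [smul_dotProduct, dotProduct_smul, smul_eq_mul, smul_eq_mul, ← mul_assoc, hk2]
    refine ⟨k • τ, hl0, hl1, ?_⟩
    rw [hform _ hl0 hl1, smul_dotProduct, smul_eq_mul]
    have e : (k * τ ⬝ᵥ τ) ^ 2 / (τ ⬝ᵥ τ) = 1 := by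
      rw [div_eq_one_iff_eq hττ.ne']
      calc (k * τ ⬝ᵥ τ) ^ 2 = (k * k * (τ ⬝ᵥ τ)) * (τ ⬝ᵥ τ) := by ring
        _ = _ := by rw [hk2, one_mul]
    rw [e]
    field_simp
    ring
  · rintro v ⟨l, hl, hl1, rfl⟩
    rw [hform l hl hl1]
    have hcs : (l ⬝ᵥ τ) ^ 2 / (τ ⬝ᵥ τ) ≤ 1 := by
      rw [div_le_one hττ]
      have := Finset.sum_mul_sq_le_sq_mul_sq Finset.univ l τ
      have h2 : (l ⬝ᵥ τ) ^ 2 ≤ (l ⬝ᵥ l) * (τ ⬝ᵥ τ) := by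
        simpa [dotProduct, sq] using this
      rwa [hl1, one_mul] at h2
    have hco : 0 ≤ (b + l0 * c) ^ 2 / (c * r) := by positivity
    have := mul_le_mul_of_nonneg_left hcs hco
    have e : (a - b ^ 2 / c) / r =
        (a + 2 * l0 * b + l0 ^ 2 * c) / r - (b + l0 * c) ^ 2 / (c * r) * 1 := by
      field_simp; ring
    rw [e]; linarith

lemma Ecrit_nice {p t : ℕ} (ht : 3 ≤ t) (n : ℕ) {S : Matrix (Fin p) (Fin p) ℝ} (hS : S.PosDef)
    (w : TrtSeq p t → ℝ) (hw : IsDesign w) (hn : NiceD n S w) (hc : 0 < cD n S w 1 1) (l0 : ℝ)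
    (g : Measure (Fin t → ℝ)) (hg : IsExchangeablePrior g) :
    EAdmissible n S g l0 w ∧ Ecrit n S g l0 w =
      (cD n S w 0 0 - cD n S w 0 1 ^ 2 / cD n S w 1 1) / ((t : ℝ) - 1) := by
  have := hg.1
  have hae : ∀ᵐ τ ∂g, (∑ i, τ i) = 0 ∧ τ ≠ 0 := by
    rw [ae_iff]; exact hg.2.1
  have hm : mD n S w l0 =ᵐ[g] fun _ =>
      (cD n S w 0 0 - cD n S w 0 1 ^ 2 / cD n S w 1 1) / ((t : ℝ) - 1) := by
    filter_upwards [hae] with τ hτ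
    exact (mD_nice ht n hS w hn hc l0 τ hτ.1 hτ.2).2
  refine ⟨⟨hw, ?_, ?_⟩, ?_⟩
  · filter_upwards [hae] with τ hτ
    exact (mD_nice ht n hS w hn hc l0 τ hτ.1 hτ.2).1
  · exact (integrable_const _).congr hm.symm
  · rw [Ecrit, integral_congr_ae hm]; simp

lemma nice_trad {p t : ℕ} (ht : 3 ≤ t) (n : ℕ) {S : Matrix (Fin p) (Fin p) ℝ} (hS : S.PosDef)
    (w : TrtSeq p t → ℝ) (hn : NiceD n S w) (hc : 0 < cD n S w 1 1)
    (G : Matrix (Fin t) (Fin t) ℝ) (hG : IsGInv (CD n S w 1 1) G) :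
    CD n S w 0 0 - CD n S w 0 1 * G * CD n S w 1 0 =
      ((cD n S w 0 0 - cD n S w 0 1 ^ 2 / cD n S w 1 1) / ((t : ℝ) - 1)) • Bmat t := by
  have ht1 : (0 : ℝ) < (t : ℝ) - 1 := by
    have : (3 : ℝ) ≤ t := by exact_mod_cast ht
    linarith
  have h10 := cD_comm n hS w 1 0
  rw [IsGInv, hn 1 1] at hG
  rw [hn 0 0, hn 0 1, hn 1 0, h10]
  set a := cD n S w 0 0
  set b := cD n S w 0 1
  set c := cD n S w 1 1
  set r := (t : ℝ) - 1
  clear_value a b c r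
  simp only [Matrix.smul_mul, Matrix.mul_smul, smul_smul] at hG ⊢
  have hB : Bmat t * G * Bmat t = (r / c) • Bmat t := by
    have := congrArg (fun X => ((c / r * (c / r))⁻¹) • X) hG
    simp only [smul_smul] at this
    rw [inv_mul_cancel₀ (by positivity), one_smul] at this
    rw [this]; congr 1; field_simp
  rw [hB, smul_smul, ← sub_smul]
  congr 1
  field_simp

lemma alg1 (a b c : ℝ) (hc : 0 < c) :
    a - b ^ 2 / c = a + 2 * b * (-(b / c)) + c * (-(b / c)) ^ 2 := by
  field_simp; ring

lemma alg2 (a b c x : ℝ) (hc : 0 < c) : a - b ^ 2 / c ≤ a + 2 * b * x + c * x ^ 2 := by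
  have : a + 2 * b * x + c * x ^ 2 - (a - b ^ 2 / c) = (b + c * x) ^ 2 / c := by
    field_simp; ring
  have h2 : 0 ≤ (b + c * x) ^ 2 / c := by positivity
  linarith

/-- a pseudo symmetric `E_{g,λ0}`-optimal design for the proportional
model is universally optimal under the traditional linear crossover model. -/
theorem stmt19 (p t n : ℕ) (hp : 2 ≤ p) (ht : 3 ≤ t) (hn : 1 ≤ n)
    (S : Matrix (Fin p) (Fin p) ℝ) (hS : S.PosDef)
    (l0 : ℝ) (g : Measure (Fin t → ℝ)) (hg : IsExchangeablePrior g)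
    (w : TrtSeq p t → ℝ) (hw : IsDesign w) (hps : IsPseudoSymmetric n S w)
    (hc22 : 0 < cD n S w 1 1) (hopt : EOptimal n S g l0 w) :
    ∀ Phi : Matrix (Fin t) (Fin t) ℝ → ℝ,
      (∀ A B : Matrix (Fin t) (Fin t) ℝ, A.PosSemidef → B.PosSemidef →
        ∀ a b : ℝ, 0 ≤ a → 0 ≤ b → a + b = 1 →
          a * Phi A + b * Phi B ≤ Phi (a • A + b • B)) →
      (∀ (σ : Equiv.Perm (Fin t)) (C : Matrix (Fin t) (Fin t) ℝ), C.PosSemidef →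
        Phi ((Smat σ)ᵀ * C * Smat σ) = Phi C) →
      (∀ C : Matrix (Fin t) (Fin t) ℝ, C.PosSemidef →
        ∀ b1 b2 : ℝ, 0 < b1 → b1 ≤ b2 → Phi (b1 • C) ≤ Phi (b2 • C)) →
      ∀ w' : TrtSeq p t → ℝ, IsDesign w' →
        ∀ G' : Matrix (Fin t) (Fin t) ℝ, IsGInv (CD n S w' 1 1) G' →
        ∀ G : Matrix (Fin t) (Fin t) ℝ, IsGInv (CD n S w 1 1) G →
        Phi (CD n S w' 0 0 - CD n S w' 0 1 * G' * CD n S w' 1 0) ≤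
          Phi (CD n S w 0 0 - CD n S w 0 1 * G * CD n S w 1 0) := by
  intro Phi hconc hperm hmono w' hw' G' hG' G hG
  have ht1 : (0 : ℝ) < (t : ℝ) - 1 := by
    have : (3 : ℝ) ≤ t := by exact_mod_cast ht
    linarith
  have hnice := nice_pseudo ht n S w hps
  obtain ⟨hpsd, hrow, hbd⟩ := trad_info ht n hS w' hw' G' hG'
  rw [nice_trad ht n hS w hnice hc22 G hG]
  refine (Phi_avg ht Phi hconc hperm _ hpsd hrow).trans ?_
  have htr0 := hpsd.trace_nonneg
  set C := CD n S w' 0 0 - CD n S w' 0 1 * G' * CD n S w' 1 0 with hCdef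
  clear_value C
  set v : TrtSeq p t → ℝ := fun s => (w' s + w s) / 2 with hv
  have hvd : IsDesign v := by
    constructor
    · intro s
      have h1 := hw'.1 s
      have h2 := hw.1 s
      simp only [hv]; linarith
    · simp only [hv]
      rw [← Finset.sum_div, Finset.sum_add_distrib, hw'.2, hw.2]; norm_num
  have hcu : ∀ i j, cD n S (symmetrize v) i j = (cD n S w' i j + cD n S w i j) / 2 := by
    intro i j
    rw [cD_symmetrize, cD_eq, cD_eq, cD_eq, ← mul_add, ← Finset.sum_add_distrib,
      mul_div_assoc, Finset.sum_div]
    congr 1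
    refine Finset.sum_congr rfl fun s _ => ?_
    simp only [hv]; ring
  have hc' := cD_nonneg n hS w' hw' 1
  have hcpos : 0 < cD n S (symmetrize v) 1 1 := by rw [hcu]; linarith
  obtain ⟨hadm, hE⟩ := Ecrit_nice ht n hS (symmetrize v) (symmetrize_design v hvd)
    (nice_symm ht n S _ (symmetrize_symm v)) hcpos l0 g hg
  obtain ⟨-, hEw⟩ := Ecrit_nice ht n hS w hw hnice hc22 l0 g hg
  have hle := hopt _ hadm
  rw [hE, hEw, div_le_div_iff_of_pos_right ht1] at hle
  set x : ℝ := -(cD n S (symmetrize v) 0 1 / cD n S (symmetrize v) 1 1) with hx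
  have hq : cD n S (symmetrize v) 0 0 -
      cD n S (symmetrize v) 0 1 ^ 2 / cD n S (symmetrize v) 1 1 =
      cD n S (symmetrize v) 0 0 + 2 * cD n S (symmetrize v) 0 1 * x +
        cD n S (symmetrize v) 1 1 * x ^ 2 := by
    rw [hx]; exact alg1 _ _ _ hcpos
  rw [hq, hcu, hcu, hcu] at hle
  have hqw : cD n S w 0 0 - cD n S w 0 1 ^ 2 / cD n S w 1 1 ≤
      cD n S w 0 0 + 2 * cD n S w 0 1 * x + cD n S w 1 1 * x ^ 2 := by
    exact alg2 _ _ _ _ hc22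
  have htr := hbd x
  set y := cD n S w 0 0 - cD n S w 0 1 ^ 2 / cD n S w 1 1
  clear_value y
  have hty : C.trace ≤ y := by linarith
  have hty' : C.trace / ((t : ℝ) - 1) ≤ y / ((t : ℝ) - 1) :=
    (div_le_div_iff_of_pos_right ht1).mpr hty
  have h0 : 0 ≤ C.trace / ((t : ℝ) - 1) := by positivity
  set α := C.trace / ((t : ℝ) - 1)
  set β := y / ((t : ℝ) - 1)
  clear_value α β
  rcases h0.eq_or_lt with h | h
  · rw [← h] at hty' ⊢
    rcases hty'.eq_or_lt with h' | h'
    · rw [← h']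
    · have h1 := hconc ((0 : ℝ) • Bmat t) (β • Bmat t) (by simpa using PosSemidef.zero)
        ((Bmat_psd ht).smul hty') (1 / 2) (1 / 2) (by norm_num) (by norm_num) (by norm_num)
      have h2 := hmono (Bmat t) (Bmat_psd ht) (β / 2) β (by linarith) (by linarith)
      have h3 : ((1 : ℝ) / 2) • ((0 : ℝ) • Bmat t) + ((1 : ℝ) / 2) • β • Bmat t
          = (β / 2) • Bmat t := by
        rw [zero_smul, smul_zero, zero_add, smul_smul]; congr 1; ring
      rw [h3] at h1
      simp only [zero_smul] at h1 ⊢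
      linarith
  · exact hmono (Bmat t) (Bmat_psd ht) α β h hty'
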